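/- arXiv:2512.14125 — 2 statements merged into one kernel-verified Lean document; each statement's English description precedes it below -/
import Mathlib

section
/- Let Γ be a finite subgroup of SU(2), acting on bilinear forms by pullback. Then (V⁻)^Γ ≠ {0} if and only if there exists g ∈ SU(2) such that g Γ g⁻¹ is contained in the diagonal circle subgroup S¹ = { diag(e^{iθ}, e^{−iθ}) : θ ∈ ℝ } of SU(2). -/
/-!
Every form in `V⁻` is `(u, v) ↦ Im (u* H v)` for a unique traceless Hermitian `H`, and pullback
by a matrix `γ` replaces `H` by `γ* H γ`. For unitary `γ`, invariance therefore means that `γ`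
commutes with `H`. A nonzero traceless Hermitian `2 × 2` matrix `H` is diagonalised by some
`g ∈ SU(2)` to `diag(s, -s)` with `s ≠ 0`, whose commutant consists of the diagonal matrices; so
`g γ g⁻¹` is diagonal, and a diagonal element of `SU(2)` is `diag(e^{iθ}, e^{-iθ})`. Conversely, if
`g Γ g⁻¹` is diagonal, then `H = g* diag(1, -1) g` commutes with `Γ`.
-/

open Complex

/-- The standard anti-self-dual 2-form `ω₁⁻(u,v) = Im(conj u₁ · v₁) − Im(conj u₂ · v₂)` on `ℂ²`. -/
noncomputable def omegaMinus1 (u v : Fin 2 → ℂ) : ℝ :=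
  ((starRingEnd ℂ) (u 0) * v 0).im - ((starRingEnd ℂ) (u 1) * v 1).im

/-- The standard anti-self-dual 2-form `ω₂⁻(u,v) = Re(conj u₁ · v₂) − Re(conj u₂ · v₁)` on `ℂ²`. -/
noncomputable def omegaMinus2 (u v : Fin 2 → ℂ) : ℝ :=
  ((starRingEnd ℂ) (u 0) * v 1).re - ((starRingEnd ℂ) (u 1) * v 0).re

/-- The standard anti-self-dual 2-form `ω₃⁻(u,v) = Im(conj u₁ · v₂) + Im(conj u₂ · v₁)` on `ℂ²`. -/
noncomputable def omegaMinus3 (u v : Fin 2 → ℂ) : ℝ :=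
  ((starRingEnd ℂ) (u 0) * v 1).im + ((starRingEnd ℂ) (u 1) * v 0).im

/-- `V⁻`: the real span of `ω₁⁻, ω₂⁻, ω₃⁻`. -/
noncomputable def Vminus : Set ((Fin 2 → ℂ) → (Fin 2 → ℂ) → ℝ) :=
  {α | ∃ a b c : ℝ, α = fun u v =>
    a * omegaMinus1 u v + b * omegaMinus2 u v + c * omegaMinus3 u v}

open Matrix

/-- The real bilinear form `(u, v) ↦ Im (u* H v)` on `ℂ²` attached to a complex matrix `H`. -/
noncomputable def imForm (H : Matrix (Fin 2) (Fin 2) ℂ) (u v : Fin 2 → ℂ) : ℝ :=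
  (star u ⬝ᵥ H *ᵥ v).im

lemma imForm_mulVec (H G : Matrix (Fin 2) (Fin 2) ℂ) (u v : Fin 2 → ℂ) :
    imForm H (G *ᵥ u) (G *ᵥ v) = imForm (Gᴴ * H * G) u v := by
  simp only [imForm, star_mulVec, ← dotProduct_mulVec, mulVec_mulVec, Matrix.mul_assoc]

/-- `Im (u* H v)` at the standard basis vectors `u = eᵢ`, `v = eⱼ` and `v = √-1 eⱼ` recovers the
imaginary and the real part of `H i j`. -/
lemma imForm_injective : Function.Injective imForm := by
  intro H K h
  have key (M : Matrix (Fin 2) (Fin 2) ℂ) (i j : Fin 2) (z : ℂ) :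
      imForm M (Pi.single i 1) (Pi.single j z) = (M i j * z).im := by
    fin_cases i <;> fin_cases j <;> simp [imForm, dotProduct, mulVec, Fin.sum_univ_two]
  ext i j
  have h1 := congrFun (congrFun h (Pi.single i 1)) (Pi.single j 1)
  have h2 := congrFun (congrFun h (Pi.single i 1)) (Pi.single j I)
  rw [key, key] at h1 h2
  apply Complex.ext
  · simpa using h2
  · simpa using h1

/-- The matrix of `a ω₁⁻ + b ω₂⁻ + c ω₃⁻`. -/
noncomputable def tracelessHermitian (a b c : ℝ) : Matrix (Fin 2) (Fin 2) ℂ :=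
  !![(a : ℂ), c + b * I; c - b * I, -a]

lemma imForm_tracelessHermitian (a b c : ℝ) :
    imForm (tracelessHermitian a b c) = fun u v =>
      a * omegaMinus1 u v + b * omegaMinus2 u v + c * omegaMinus3 u v := by
  funext u v
  simp [imForm, tracelessHermitian, dotProduct, mulVec, Fin.sum_univ_two, omegaMinus1,
    omegaMinus2, omegaMinus3]
  ring

lemma eq_tracelessHermitian {H : Matrix (Fin 2) (Fin 2) ℂ} (hH : H.IsHermitian)
    (ht : H.trace = 0) : H = tracelessHermitian (H 0 0).re (H 0 1).im (H 0 1).re := by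
  have h00 := hH.apply 0 0
  have h10 := hH.apply 1 0
  rw [trace_fin_two] at ht
  have h0 : ((H 0 0).re : ℂ) = H 0 0 := Complex.conj_eq_iff_re.mp h00
  ext i j
  fin_cases i <;> fin_cases j <;> simp [tracelessHermitian, h0]
  · rw [← h10]
    apply Complex.ext <;> simp
  · linear_combination ht

/-- A matrix commuting with `diag(s, -s)`, `s ≠ 0`, is diagonal. -/
lemma offDiag_eq_zero {s : ℂ} (hs : s ≠ 0) {M : Matrix (Fin 2) (Fin 2) ℂ}
    (h : M * !![s, 0; 0, -s] = !![s, 0; 0, -s] * M) : M 0 1 = 0 ∧ M 1 0 = 0 := by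
  have h01 := congrFun (congrFun h 0) 1
  have h10 := congrFun (congrFun h 1) 0
  simp [Matrix.mul_apply, Fin.sum_univ_two] at h01 h10
  have h2 : 2 * s ≠ 0 := mul_ne_zero two_ne_zero hs
  constructor
  · apply (mul_eq_zero_iff_left h2).mp
    linear_combination -h01
  · apply (mul_eq_zero_iff_left h2).mp
    linear_combination h10

/-- Spectral theorem for traceless Hermitian `2 × 2` matrices, with diagonalising matrix in
`SU(2)`. -/
lemma exists_diagonalizing {a b c : ℝ} (h : tracelessHermitian a b c ≠ 0) :
    ∃ (g : unitaryGroup (Fin 2) ℂ) (s : ℂ), (g : Matrix (Fin 2) (Fin 2) ℂ).det = 1 ∧ s ≠ 0 ∧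
      (g : Matrix (Fin 2) (Fin 2) ℂ) * tracelessHermitian a b c = !![s, 0; 0, -s] * g := by
  by_cases hz : c ^ 2 + b ^ 2 = 0
  · have hb : b = 0 := by nlinarith [sq_nonneg b, sq_nonneg c]
    have hc : c = 0 := by nlinarith [sq_nonneg b, sq_nonneg c]
    subst hb hc
    refine ⟨1, a, by simp, ?_, by simp [tracelessHermitian]⟩
    intro ha
    apply h
    ext i j
    fin_cases i <;> fin_cases j <;> simp [tracelessHermitian, ha]
  · -- `(c + b √-1, r - a)` is an eigenvector for the eigenvalue `r`; the first row of `g` is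
    -- its normalised conjugate.
    have hz' : 0 < c ^ 2 + b ^ 2 := lt_of_le_of_ne (by positivity) (Ne.symm hz)
    obtain ⟨r, hr0, hr⟩ : ∃ r : ℝ, 0 < r ∧ r ^ 2 = a ^ 2 + (c ^ 2 + b ^ 2) :=
      ⟨√(a ^ 2 + (c ^ 2 + b ^ 2)), by positivity, Real.sq_sqrt (by positivity)⟩
    obtain ⟨n, hn⟩ : ∃ n : ℝ, n ^ 2 * (c ^ 2 + b ^ 2 + (r - a) ^ 2) = 1 := by
      refine ⟨(√(c ^ 2 + b ^ 2 + (r - a) ^ 2))⁻¹, ?_⟩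
      rw [inv_pow, Real.sq_sqrt (by positivity)]
      exact inv_mul_cancel₀ (by positivity)
    have hr' : (r : ℂ) ^ 2 = a ^ 2 + (c ^ 2 + b ^ 2) := by exact_mod_cast hr
    have hn' : (n : ℂ) ^ 2 * (c ^ 2 + b ^ 2 + (r - a) ^ 2) = 1 := by exact_mod_cast hn
    have hu : !![(n : ℂ) * (c - b * I), n * (r - a); -(n * (r - a)), n * (c + b * I)] ∈
        unitaryGroup (Fin 2) ℂ := by
      rw [mem_unitaryGroup_iff]
      ext i j
      fin_cases i <;> fin_cases j <;>
        simp [Matrix.mul_apply, Fin.sum_univ_two, star_eq_conjTranspose]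
      · linear_combination hn' - (n : ℂ) ^ 2 * b ^ 2 * I_sq
      · ring
      · ring
      · linear_combination hn' - (n : ℂ) ^ 2 * b ^ 2 * I_sq
    refine ⟨⟨_, hu⟩, r, ?_, by exact_mod_cast hr0.ne', ?_⟩
    · rw [det_fin_two_of]
      linear_combination hn' - (n : ℂ) ^ 2 * b ^ 2 * I_sq
    · ext i j
      fin_cases i <;> fin_cases j <;>
        simp [Matrix.mul_apply, Fin.sum_univ_two, tracelessHermitian]
      · ring
      · linear_combination -(n : ℂ) * hr' - (n : ℂ) * b ^ 2 * I_sq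
      · linear_combination -(n : ℂ) * hr' - (n : ℂ) * b ^ 2 * I_sq
      · ring

/-- A diagonal element of `SU(2)` lies on the circle `diag(e^{iθ}, e^{-iθ})`. -/
lemma exists_angle (M : unitaryGroup (Fin 2) ℂ)
    (hd : (M : Matrix (Fin 2) (Fin 2) ℂ).det = 1)
    (h01 : (M : Matrix (Fin 2) (Fin 2) ℂ) 0 1 = 0)
    (h10 : (M : Matrix (Fin 2) (Fin 2) ℂ) 1 0 = 0) :
    ∃ θ : ℝ, (M : Matrix (Fin 2) (Fin 2) ℂ) =
      !![Complex.exp (θ * I), 0; 0, Complex.exp (-θ * I)] := by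
  obtain ⟨M, hM⟩ := M
  simp only at hd h01 h10 ⊢
  have h := congrFun (congrFun (mem_unitaryGroup_iff.mp hM) 0) 0
  simp [Matrix.mul_apply, Fin.sum_univ_two, star_eq_conjTranspose, h01] at h
  have hn : ‖M 0 0‖ = 1 := by
    rw [Complex.mul_conj'] at h
    have : ‖M 0 0‖ ^ 2 = 1 := by exact_mod_cast h
    exact (pow_eq_one_iff_of_nonneg (norm_nonneg _) two_ne_zero).mp this
  obtain ⟨θ, hθ⟩ := (Complex.norm_eq_one_iff _).mp hn
  rw [det_fin_two, h01, zero_mul, sub_zero, ← hθ] at hd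
  refine ⟨θ, ?_⟩
  have h11 : M 1 1 = Complex.exp (-θ * I) := by
    rw [neg_mul, Complex.exp_neg]
    exact eq_inv_of_mul_eq_one_right hd
  ext i j
  fin_cases i <;> fin_cases j <;> simp [h01, h10, hθ, h11]

/-- **Existence of nonzero `Γ`-invariant anti-self-dual forms.**
For a finite subgroup `Γ` of `SU(2)` (a finite subgroup of `U(2)` whose elements have
determinant `1`), the fixed space `(V⁻)^Γ` under pullback is nonzero if and only if some
`SU(2)`-conjugate of `Γ` lies in the diagonal circle `S¹ = {diag(e^{iθ}, e^{−iθ})}`. -/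
theorem Vminus_invariant_nonzero_iff_conjugate_into_circle
    (Γ : Subgroup (Matrix.unitaryGroup (Fin 2) ℂ)) [Finite Γ]
    (hdet : ∀ γ ∈ Γ, (γ : Matrix (Fin 2) (Fin 2) ℂ).det = 1) :
    (∃ α ∈ Vminus, α ≠ 0 ∧ ∀ γ ∈ Γ, ∀ u v : Fin 2 → ℂ,
        α ((γ : Matrix (Fin 2) (Fin 2) ℂ).mulVec u)
          ((γ : Matrix (Fin 2) (Fin 2) ℂ).mulVec v) = α u v)
      ↔ (∃ g : Matrix.unitaryGroup (Fin 2) ℂ, (g : Matrix (Fin 2) (Fin 2) ℂ).det = 1 ∧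
          ∀ γ ∈ Γ, ∃ θ : ℝ,
            ((g * γ * g⁻¹ : Matrix.unitaryGroup (Fin 2) ℂ) : Matrix (Fin 2) (Fin 2) ℂ)
              = !![Complex.exp (θ * Complex.I), 0; 0, Complex.exp (-θ * Complex.I)]) := by
  have hl (g : unitaryGroup (Fin 2) ℂ) : (g : Matrix (Fin 2) (Fin 2) ℂ)ᴴ * (g : Matrix (Fin 2) (Fin 2) ℂ) = 1 :=
    mem_unitaryGroup_iff'.mp g.2
  have hr (g : unitaryGroup (Fin 2) ℂ) : (g : Matrix (Fin 2) (Fin 2) ℂ) * (g : Matrix (Fin 2) (Fin 2) ℂ)ᴴ = 1 :=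
    mem_unitaryGroup_iff.mp g.2
  constructor
  · rintro ⟨α, ⟨a, b, c, hα⟩, h0, hΓ⟩
    rw [← imForm_tracelessHermitian] at hα
    subst hα
    have hH : tracelessHermitian a b c ≠ 0 := by
      intro h
      apply h0
      funext u v
      simp [h, imForm]
    obtain ⟨g, s, hg, hs, hgs⟩ := exists_diagonalizing hH
    refine ⟨g, hg, fun γ hγ => ?_⟩
    set H := tracelessHermitian a b c
    set D : Matrix (Fin 2) (Fin 2) ℂ := !![s, 0; 0, -s]
    have hpull : (γ : Matrix (Fin 2) (Fin 2) ℂ)ᴴ * H * γ = H := by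
      apply imForm_injective
      funext u v
      rw [← imForm_mulVec]
      exact hΓ γ hγ u v
    have hcomm : H * γ = γ * H := by
      calc H * (γ : Matrix (Fin 2) (Fin 2) ℂ) = (γ * (γ : Matrix (Fin 2) (Fin 2) ℂ)ᴴ) * (H * γ) := by rw [hr, one_mul]
        _ = γ * ((γ : Matrix (Fin 2) (Fin 2) ℂ)ᴴ * H * γ) := by simp only [Matrix.mul_assoc]
        _ = γ * H := by rw [hpull]
    have hgs' : H * (g : Matrix (Fin 2) (Fin 2) ℂ)ᴴ = (g : Matrix (Fin 2) (Fin 2) ℂ)ᴴ * D := by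
      calc H * (g : Matrix (Fin 2) (Fin 2) ℂ)ᴴ
          = ((g : Matrix (Fin 2) (Fin 2) ℂ)ᴴ * g) * (H * (g : Matrix (Fin 2) (Fin 2) ℂ)ᴴ) := by rw [hl, one_mul]
        _ = (g : Matrix (Fin 2) (Fin 2) ℂ)ᴴ * (g * H) * (g : Matrix (Fin 2) (Fin 2) ℂ)ᴴ := by
          simp only [Matrix.mul_assoc]
        _ = (g : Matrix (Fin 2) (Fin 2) ℂ)ᴴ * D * (g * (g : Matrix (Fin 2) (Fin 2) ℂ)ᴴ) := by
          rw [hgs]; simp only [Matrix.mul_assoc]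
        _ = (g : Matrix (Fin 2) (Fin 2) ℂ)ᴴ * D := by rw [hr, mul_one]
    have hD : ((g * γ * g⁻¹ : unitaryGroup (Fin 2) ℂ) : Matrix (Fin 2) (Fin 2) ℂ) * D =
        D * ((g * γ * g⁻¹ : unitaryGroup (Fin 2) ℂ) : Matrix (Fin 2) (Fin 2) ℂ) := by
      change (g * γ * (g : Matrix (Fin 2) (Fin 2) ℂ)ᴴ) * D = D * (g * γ * (g : Matrix (Fin 2) (Fin 2) ℂ)ᴴ)
      calc (g * γ * (g : Matrix (Fin 2) (Fin 2) ℂ)ᴴ) * D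
          = g * (γ * H) * (g : Matrix (Fin 2) (Fin 2) ℂ)ᴴ := by
            rw [Matrix.mul_assoc, ← hgs']; simp only [Matrix.mul_assoc]
        _ = (g * H) * γ * (g : Matrix (Fin 2) (Fin 2) ℂ)ᴴ := by
            rw [← hcomm]; simp only [Matrix.mul_assoc]
        _ = D * (g * γ * (g : Matrix (Fin 2) (Fin 2) ℂ)ᴴ) := by
            rw [hgs]; simp only [Matrix.mul_assoc]
    obtain ⟨h01, h10⟩ := offDiag_eq_zero hs hD
    refine exists_angle _ ?_ h01 h10
    change ((g : Matrix (Fin 2) (Fin 2) ℂ) * γ * (g : Matrix (Fin 2) (Fin 2) ℂ)ᴴ).det = 1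
    rw [det_mul, det_mul, det_conjTranspose, hg, hdet γ hγ]
    simp
  · rintro ⟨g, -, hΓ⟩
    set D : Matrix (Fin 2) (Fin 2) ℂ := !![1, 0; 0, -1] with hDdef
    set H : Matrix (Fin 2) (Fin 2) ℂ := (g : Matrix (Fin 2) (Fin 2) ℂ)ᴴ * D * g with hHdef
    have hDh : D.IsHermitian := by
      ext i j
      fin_cases i <;> fin_cases j <;> simp [hDdef]
    have hHh : H.IsHermitian := isHermitian_conjTranspose_mul_mul _ hDh
    have hHt : H.trace = 0 := by
      rw [hHdef, trace_mul_comm, ← Matrix.mul_assoc, hr, one_mul, trace_fin_two]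
      simp [hDdef]
    refine ⟨imForm H,
      ⟨(H 0 0).re, (H 0 1).im, (H 0 1).re, ?_⟩, ?_, ?_⟩
    · rw [← imForm_tracelessHermitian, ← eq_tracelessHermitian hHh hHt]
    · intro h0
      have hH0 : H = 0 := by
        apply imForm_injective
        rw [h0]
        funext u v
        simp [imForm]
      have hD0 : D = 0 := by
        calc D = (g * (g : Matrix (Fin 2) (Fin 2) ℂ)ᴴ) * D * (g * (g : Matrix (Fin 2) (Fin 2) ℂ)ᴴ) := by
              rw [hr, one_mul, mul_one]
          _ = g * H * (g : Matrix (Fin 2) (Fin 2) ℂ)ᴴ := by rw [hHdef]; simp only [Matrix.mul_assoc]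
          _ = 0 := by rw [hH0]; simp
      simpa [hDdef] using congrFun (congrFun hD0 0) 0
    · intro γ hγ u v
      obtain ⟨θ, hθ⟩ := hΓ γ hγ
      rw [imForm_mulVec]
      congr 1
      set T := g * γ * g⁻¹ with hT
      have hDT : D * (T : Matrix (Fin 2) (Fin 2) ℂ) = T * D := by
        rw [hθ, hDdef]
        ext i j
        fin_cases i <;> fin_cases j <;> simp [Matrix.mul_apply, Fin.sum_univ_two]
      have hgγ : (g : Matrix (Fin 2) (Fin 2) ℂ) * γ = (T : Matrix (Fin 2) (Fin 2) ℂ) * g := by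
        have : g * γ = T * g := by rw [hT]; group
        exact congrArg Subtype.val this
      calc (γ : Matrix (Fin 2) (Fin 2) ℂ)ᴴ * H * γ
          = (g * γ : Matrix (Fin 2) (Fin 2) ℂ)ᴴ * D * (g * γ) := by
            rw [hHdef, conjTranspose_mul]; simp only [Matrix.mul_assoc]
        _ = (g : Matrix (Fin 2) (Fin 2) ℂ)ᴴ * ((T : Matrix (Fin 2) (Fin 2) ℂ)ᴴ * (D * T)) * g := by
            rw [hgγ, conjTranspose_mul]; simp only [Matrix.mul_assoc]
        _ = H := by rw [hDT, ← Matrix.mul_assoc (T : Matrix (Fin 2) (Fin 2) ℂ)ᴴ, hl, one_mul]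
end

section
/- Let h : ℝ⁴ ∖ {0} → ℝ be smooth and suppose that for every j ≥ 0 there is a constant C_j with ‖D^j h(x)‖ ≤ C_j ‖x‖^{−2−j} for all x ≠ 0. Define ĥ(x) = ∫_{‖x‖}^∞ h(t·x/‖x‖)·t⁻¹ dt. Then ĥ is well-defined and smooth on ℝ⁴ ∖ {0}, and for every k ≥ 0 there is a constant C'_k with ‖D^k ĥ(x)‖ ≤ C'_k ‖x‖^{−2−k} for all x ≠ 0. -/
/-!
The substitution `t = s‖x‖` turns the radial integral into `ĥ(x) = ∫_1^∞ h(s x) s⁻¹ ds`, whose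
domain no longer depends on `x`. Formally differentiating `k` times under the integral sign gives
`∫_1^∞ s^k D^k h(s x) s⁻¹ ds`, and the decay hypothesis bounds the integrand by
`s^k · C_k (s‖x‖)^(-2-k) · s⁻¹ = C_k ‖x‖^(-2-k) s⁻³`, which is integrable on `(1, ∞)` locally
uniformly in `x ≠ 0`. Dominated differentiation (`hasFDerivAt_rayTaylor`) therefore shows that
these integrals form a Taylor series of `ĥ` to all orders on the punctured space. This gives
smoothness, and, as iterated derivatives are unique, integrating the bound above gives the decay.
-/

open MeasureTheory

/-- The radial integral `ĥ(x) = ∫_{‖x‖}^∞ h(t·x/‖x‖)·t⁻¹ dt`. -/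
noncomputable def radialHat (h : EuclideanSpace ℝ (Fin 4) → ℝ)
    (x : EuclideanSpace ℝ (Fin 4)) : ℝ :=
  ∫ t in Set.Ioi ‖x‖, h ((t / ‖x‖) • x) * t⁻¹

open Set Filter Topology

section Ray

variable {E : Type*} [NormedAddCommGroup E] [NormedSpace ℝ E]

/-- The integrand `s^k D^k h(s x) s⁻¹` of the `k`-th derivative of `x ↦ ∫_1^∞ h(s x) s⁻¹ ds`. -/
noncomputable def rayIntegrand (h : E → ℝ) (k : ℕ) (x : E) (s : ℝ) : E [×k]→L[ℝ] ℝ :=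
  (s ^ k * s⁻¹) • iteratedFDerivWithin ℝ k h {y : E | y ≠ 0} (s • x)

/-- The formal Taylor series at `x` of `x ↦ ∫_1^∞ h(s x) s⁻¹ ds`, obtained by differentiating under
the integral sign. -/
noncomputable def rayTaylor (h : E → ℝ) (x : E) : FormalMultilinearSeries ℝ E ℝ :=
  fun k => ∫ s in Ioi (1 : ℝ), rayIntegrand h k x s

lemma isOpen_punctured {E : Type*} [NormedAddCommGroup E] : IsOpen {y : E | y ≠ 0} := isOpen_ne

lemma norm_rayIntegrand_le {h : E → ℝ} {k : ℕ} {C : ℝ}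
    (hC : ∀ x : E, x ≠ 0 →
      ‖iteratedFDerivWithin ℝ k h {y : E | y ≠ 0} x‖ ≤ C * ‖x‖ ^ (-(2:ℝ) - k))
    {x : E} (hx : x ≠ 0) {s : ℝ} (hs : 1 < s) :
    ‖rayIntegrand h k x s‖ ≤ C * ‖x‖ ^ (-(2:ℝ) - k) * s ^ (-3 : ℝ) := by
  have hs0 : 0 < s := by linarith
  have hpow : s ^ k * s⁻¹ * s ^ (-(2:ℝ) - k) = s ^ (-3 : ℝ) := by
    rw [← Real.rpow_natCast, ← Real.rpow_neg_one, ← Real.rpow_add hs0, ← Real.rpow_add hs0]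
    congr 1
    ring
  have h1 := hC (s • x) (smul_ne_zero hs0.ne' hx)
  rw [norm_smul, Real.norm_of_nonneg hs0.le, Real.mul_rpow hs0.le (norm_nonneg x)] at h1
  have hw : 0 ≤ s ^ k * s⁻¹ := by positivity
  rw [rayIntegrand, norm_smul, Real.norm_of_nonneg hw]
  calc _ ≤ s ^ k * s⁻¹ * (C * (s ^ (-(2:ℝ) - k) * ‖x‖ ^ (-(2:ℝ) - k))) := by gcongr
    _ = C * ‖x‖ ^ (-(2:ℝ) - k) * (s ^ k * s⁻¹ * s ^ (-(2:ℝ) - k)) := by ring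
    _ = _ := by rw [hpow]

lemma integrableOn_rpow_neg_three : IntegrableOn (fun s : ℝ => s ^ (-3 : ℝ)) (Ioi 1) :=
  integrableOn_Ioi_rpow_of_lt (by norm_num) one_pos

lemma hasFDerivAt_iteratedFDerivWithin {h : E → ℝ}
    (hsmooth : ContDiffOn ℝ (⊤ : ℕ∞) h {y : E | y ≠ 0})
    (k : ℕ) {y : E} (hy : y ≠ 0) :
    HasFDerivAt (iteratedFDerivWithin ℝ k h {y : E | y ≠ 0})
      (iteratedFDerivWithin ℝ (k + 1) h {y : E | y ≠ 0} y).curryLeft y :=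
  (((hasFTaylorSeriesUpToOn_top_iff' le_rfl).1
    (hsmooth.ftaylorSeriesWithin isOpen_punctured.uniqueDiffOn)).2 k y hy).hasFDerivAt
      (isOpen_punctured.mem_nhds hy)

lemma aestronglyMeasurable_rayIntegrand {h : E → ℝ}
    (hsmooth : ContDiffOn ℝ (⊤ : ℕ∞) h {y : E | y ≠ 0})
    (k : ℕ) {x : E} (hx : x ≠ 0) :
    AEStronglyMeasurable (rayIntegrand h k x) (volume.restrict (Ioi 1)) := by
  refine ContinuousOn.aestronglyMeasurable (fun s hs => ?_) measurableSet_Ioi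
  have hs0 : s ≠ 0 := (zero_lt_one.trans hs).ne'
  have h1 : ContinuousAt (fun s : ℝ => iteratedFDerivWithin ℝ k h {y : E | y ≠ 0} (s • x)) s :=
    ContinuousAt.comp (g := iteratedFDerivWithin ℝ k h {y : E | y ≠ 0}) (f := fun s : ℝ => s • x)
      (hasFDerivAt_iteratedFDerivWithin hsmooth k (smul_ne_zero hs0 hx)).continuousAt
      (by fun_prop)
  have h2 : ContinuousAt (fun s : ℝ => s ^ k * s⁻¹) s := by fun_prop (disch := exact hs0)
  exact (h2.smul h1).continuousWithinAt

lemma integrable_rayIntegrand {h : E → ℝ}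
    (hsmooth : ContDiffOn ℝ (⊤ : ℕ∞) h {y : E | y ≠ 0})
    {k : ℕ} {C : ℝ}
    (hC : ∀ x : E, x ≠ 0 →
      ‖iteratedFDerivWithin ℝ k h {y : E | y ≠ 0} x‖ ≤ C * ‖x‖ ^ (-(2:ℝ) - k))
    {x : E} (hx : x ≠ 0) : IntegrableOn (rayIntegrand h k x) (Ioi 1) := by
  refine (integrableOn_rpow_neg_three.const_mul (C * ‖x‖ ^ (-(2:ℝ) - k))).mono'
    (aestronglyMeasurable_rayIntegrand hsmooth k hx) ?_
  filter_upwards [ae_restrict_mem measurableSet_Ioi] with s hs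
  exact norm_rayIntegrand_le hC hx hs

/-- The chain rule for `x ↦ s x` supplies the extra factor `s` in the next integrand. -/
lemma hasFDerivAt_rayIntegrand {h : E → ℝ}
    (hsmooth : ContDiffOn ℝ (⊤ : ℕ∞) h {y : E | y ≠ 0})
    (k : ℕ) {x : E} (hx : x ≠ 0) {s : ℝ} (hs : s ≠ 0) :
    HasFDerivAt (fun x => rayIntegrand h k x s) (rayIntegrand h (k + 1) x s).curryLeft x := by
  have h1 := ((hasFDerivAt_iteratedFDerivWithin hsmooth k (smul_ne_zero hs hx)).comp x
    ((hasFDerivAt_id x).const_smul s)).const_smul (s ^ k * s⁻¹)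
  refine h1.congr_fderiv ?_
  ext v w
  simp [rayIntegrand, pow_succ]
  ring

lemma hasFDerivAt_rayTaylor {h : E → ℝ}
    (hsmooth : ContDiffOn ℝ (⊤ : ℕ∞) h {y : E | y ≠ 0})
    (hdecay : ∀ j : ℕ, ∃ C : ℝ, ∀ x : E, x ≠ 0 →
      ‖iteratedFDerivWithin ℝ j h {y : E | y ≠ 0} x‖ ≤ C * ‖x‖ ^ (-(2:ℝ) - j))
    (k : ℕ) {x₀ : E} (hx₀ : x₀ ≠ 0) :
    HasFDerivAt (fun x => rayTaylor h x k) (rayTaylor h x₀ (k + 1)).curryLeft x₀ := by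
  obtain ⟨C, hC⟩ := hdecay k
  obtain ⟨C', hC'⟩ := hdecay (k + 1)
  have hn : 0 < ‖x₀‖ := norm_pos_iff.2 hx₀
  have hCnonneg : 0 ≤ C' :=
    nonneg_of_mul_nonneg_left ((norm_nonneg _).trans (hC' x₀ hx₀)) (by positivity)
  -- On this ball the norm stays away from `0`, so the bound `C' ‖x‖ ^ (-3 - k) s⁻³` on the
  -- derivative is uniform there.
  have hball : ∀ x ∈ Metric.ball x₀ (‖x₀‖ / 2), ‖x₀‖ / 2 ≤ ‖x‖ := by
    intro x hx
    rw [mem_ball_iff_norm'] at hx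
    linarith [norm_sub_norm_le x₀ x]
  have hball0 : ∀ x ∈ Metric.ball x₀ (‖x₀‖ / 2), x ≠ 0 := fun x hx =>
    norm_pos_iff.1 ((half_pos hn).trans_le (hball x hx))
  -- Currying is a linear isometric equivalence, hence commutes with the integral.
  have hcurry : (rayTaylor h x₀ (k + 1)).curryLeft =
      ∫ s in Ioi (1 : ℝ), (rayIntegrand h (k + 1) x₀ s).curryLeft := by
    have hcomm := ContinuousLinearEquiv.integral_comp_comm (𝕜 := ℝ)
      (E := E [×(k + 1)]→L[ℝ] ℝ) (F := E →L[ℝ] E [×k]→L[ℝ] ℝ) (μ := volume.restrict (Ioi (1 : ℝ)))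
      (continuousMultilinearCurryLeftEquiv ℝ (fun _ : Fin (k + 1) => E) ℝ).toContinuousLinearEquiv
      (rayIntegrand h (k + 1) x₀)
    exact hcomm.symm
  rw [hcurry]
  refine hasFDerivAt_integral_of_dominated_of_fderiv_le
    (F := fun x s => rayIntegrand h k x s)
    (F' := fun x s => (rayIntegrand h (k + 1) x s).curryLeft)
    (bound := fun s => C' * (‖x₀‖ / 2) ^ (-(2:ℝ) - (k + 1 : ℕ)) * s ^ (-3 : ℝ))
    (Metric.ball_mem_nhds x₀ (half_pos hn)) ?_ (integrable_rayIntegrand hsmooth hC hx₀) ?_ ?_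
    (integrableOn_rpow_neg_three.const_mul _) ?_
  · filter_upwards [Metric.ball_mem_nhds x₀ (half_pos hn)] with x hx
    exact aestronglyMeasurable_rayIntegrand hsmooth k (hball0 x hx)
  · exact (continuousMultilinearCurryLeftEquiv ℝ (fun _ : Fin (k + 1) => E) ℝ
      ).continuous.comp_aestronglyMeasurable
        (aestronglyMeasurable_rayIntegrand hsmooth (k + 1) hx₀)
  · filter_upwards [ae_restrict_mem measurableSet_Ioi] with s hs x hx
    have hs0 : 0 < s := zero_lt_one.trans hs
    rw [ContinuousMultilinearMap.curryLeft_norm]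
    refine (norm_rayIntegrand_le hC' (hball0 x hx) hs).trans ?_
    have hmono : ‖x‖ ^ (-(2:ℝ) - (k + 1 : ℕ)) ≤ (‖x₀‖ / 2) ^ (-(2:ℝ) - (k + 1 : ℕ)) :=
      Real.rpow_le_rpow_of_nonpos (half_pos hn) (hball x hx)
        (by linarith [Nat.cast_nonneg (α := ℝ) (k + 1)])
    gcongr
  · filter_upwards [ae_restrict_mem measurableSet_Ioi] with s hs x hx
    exact hasFDerivAt_rayIntegrand hsmooth k (hball0 x hx) (zero_lt_one.trans hs).ne'

lemma hasFTaylorSeriesUpToOn_rayTaylor {h : E → ℝ}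
    (hsmooth : ContDiffOn ℝ (⊤ : ℕ∞) h {y : E | y ≠ 0})
    (hdecay : ∀ j : ℕ, ∃ C : ℝ, ∀ x : E, x ≠ 0 →
      ‖iteratedFDerivWithin ℝ j h {y : E | y ≠ 0} x‖ ≤ C * ‖x‖ ^ (-(2:ℝ) - j))
    {f : E → ℝ}
    (hf : ∀ x : E, x ≠ 0 → f x = ∫ s in Ioi (1 : ℝ), h (s • x) * s⁻¹) :
    HasFTaylorSeriesUpToOn (⊤ : ℕ∞) f (rayTaylor h) {y : E | y ≠ 0} := by
  refine (hasFTaylorSeriesUpToOn_top_iff' le_rfl).2 ⟨fun x hx => ?_, fun m x hx =>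
    (hasFDerivAt_rayTaylor hsmooth hdecay m hx).hasFDerivWithinAt⟩
  obtain ⟨C, hC⟩ := hdecay 0
  rw [hf x hx, ContinuousMultilinearMap.curry0_apply, rayTaylor,
    ContinuousMultilinearMap.integral_apply (integrable_rayIntegrand hsmooth hC hx)]
  refine integral_congr_ae (.of_forall fun s => ?_)
  simp [rayIntegrand, mul_comm]

end Ray

/-- The integrand of `radialHat` at `t = ‖x‖ s`; the factor `‖x‖⁻¹` cancels the Jacobian of this
substitution. -/
lemma radial_integrand_comp_mul (h : EuclideanSpace ℝ (Fin 4) → ℝ)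
    {x : EuclideanSpace ℝ (Fin 4)} (hx : x ≠ 0) (s : ℝ) :
    h ((‖x‖ * s / ‖x‖) • x) * (‖x‖ * s)⁻¹ = ‖x‖⁻¹ * (h (s • x) * s⁻¹) := by
  rw [mul_div_cancel_left₀ _ (norm_ne_zero_iff.2 hx), mul_inv]
  ring

lemma radialHat_eq_integral_Ioi_one (h : EuclideanSpace ℝ (Fin 4) → ℝ)
    {x : EuclideanSpace ℝ (Fin 4)} (hx : x ≠ 0) :
    radialHat h x = ∫ s in Ioi (1 : ℝ), h (s • x) * s⁻¹ := by
  have hn : 0 < ‖x‖ := norm_pos_iff.2 hx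
  have key := integral_comp_mul_left_Ioi' (fun t => h ((t / ‖x‖) • x) * t⁻¹) 1 hn
  simp only [radial_integrand_comp_mul h hx, mul_one] at key
  rw [radialHat, ← key, integral_const_mul, smul_eq_mul, mul_inv_cancel_left₀ hn.ne']

/-- **Decay of the radial primitive.** If `h` is smooth on `ℝ⁴ ∖ {0}` with
`‖D^j h(x)‖ ≤ C_j ‖x‖^{−2−j}`, then `ĥ(x) = ∫_{‖x‖}^∞ h(t·x/‖x‖)·t⁻¹ dt` is well-defined
(the integrand is integrable on the ray) and smooth on `ℝ⁴ ∖ {0}`, with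
`‖D^k ĥ(x)‖ ≤ C'_k ‖x‖^{−2−k}` for every `k`. -/
theorem radialHat_smooth_and_decay (h : EuclideanSpace ℝ (Fin 4) → ℝ)
    (hsmooth : ContDiffOn ℝ (⊤ : ℕ∞) h {y : EuclideanSpace ℝ (Fin 4) | y ≠ 0})
    (hdecay : ∀ j : ℕ, ∃ C : ℝ, ∀ x : EuclideanSpace ℝ (Fin 4), x ≠ 0 →
      ‖iteratedFDerivWithin ℝ j h {y : EuclideanSpace ℝ (Fin 4) | y ≠ 0} x‖
        ≤ C * ‖x‖ ^ (-(2:ℝ) - j)) :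
    (∀ x : EuclideanSpace ℝ (Fin 4), x ≠ 0 →
      IntegrableOn (fun t : ℝ => h ((t / ‖x‖) • x) * t⁻¹) (Set.Ioi ‖x‖)) ∧
    ContDiffOn ℝ (⊤ : ℕ∞) (radialHat h) {y : EuclideanSpace ℝ (Fin 4) | y ≠ 0} ∧
    (∀ k : ℕ, ∃ C : ℝ, ∀ x : EuclideanSpace ℝ (Fin 4), x ≠ 0 →
      ‖iteratedFDerivWithin ℝ k (radialHat h) {y : EuclideanSpace ℝ (Fin 4) | y ≠ 0} x‖
        ≤ C * ‖x‖ ^ (-(2:ℝ) - k)) := by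
  have hT := hasFTaylorSeriesUpToOn_rayTaylor hsmooth hdecay
    (fun x hx => radialHat_eq_integral_Ioi_one h hx)
  refine ⟨fun x hx => ?_, hT.contDiffOn, fun k => ?_⟩
  · obtain ⟨C, hC⟩ := hdecay 0
    have hint : IntegrableOn (fun s : ℝ => h (s • x) * s⁻¹) (Ioi 1) := by
      refine ((ContinuousMultilinearMap.apply ℝ (fun _ : Fin 0 => EuclideanSpace ℝ (Fin 4)) ℝ
        0).integrable_comp (integrable_rayIntegrand hsmooth hC hx)).congr (.of_forall fun s => ?_)
      simp [rayIntegrand, mul_comm]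
    have key := integrableOn_Ioi_comp_mul_left_iff (fun t => h ((t / ‖x‖) • x) * t⁻¹) 1
      (norm_pos_iff.2 hx)
    simp only [radial_integrand_comp_mul h hx, mul_one] at key
    exact key.1 (hint.const_mul _)
  · obtain ⟨C, hC⟩ := hdecay k
    refine ⟨C * ∫ s in Ioi (1 : ℝ), s ^ (-3 : ℝ), fun x hx => ?_⟩
    rw [← hT.eq_iteratedFDerivWithin_of_uniqueDiffOn (mod_cast le_top)
      isOpen_punctured.uniqueDiffOn hx, mul_right_comm, ← integral_const_mul]
    refine norm_integral_le_of_norm_le (integrableOn_rpow_neg_three.const_mul _) ?_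
    filter_upwards [ae_restrict_mem measurableSet_Ioi] with s hs
    exact norm_rayIntegrand_le hC hx hs
end
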